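/- arXiv:2006.14935 — 2 statements merged into one kernel-verified Lean document; each statement's English description precedes it below -/
import Mathlib

section
/- For t > 0 define h_t : ℝ → ℝ by h_t(r) = ∫_{−t}^{t} cos(ru) · 2√2 · e^{−t/2} · √(cosh t − cosh u) du (the Selberg transform of the radial kernel k_t(ρ) = e^{−t/2}·1_{[0,t]}(ρ)). Then for every compact interval I ⊂ (1/4, ∞) there exist constants C_I > 0 and T_I > 0 such that for all T > T_I and all r ∈ ℝ with 1/4 + r² ∈ I, one has (1/T) ∫₀^T |h_t(r)|² dt ≥ C_I. -/
/-- The Selberg transform of the ball-averaging kernel `k_t(ρ) = e^{-t/2} · 1_{[0,t]}(ρ)`: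
`h_t(r) = ∫_{-t}^{t} cos (r u) · 2√2 · e^{-t/2} · √(cosh t - cosh u) du`. -/
noncomputable def selbergTransformBall (t r : ℝ) : ℝ :=
  ∫ u in (-t)..t,
    Real.cos (r * u) *
      (2 * Real.sqrt 2 * Real.exp (-t / 2) * Real.sqrt (Real.cosh t - Real.cosh u))

/-!
The distance `s = t - u` from the edge of the support turns the transform into
`4 ∫₀ᵗ cos (r (t - s)) √((1 - e^{-s}) (1 - e^{s - 2t})) ds`. Up to `O(e^{s - 2t})` the square root
is `1 - q s` with `q s = 1 - √(1 - e^{-s})`, so `h_t(r) = 4 (A cos (r t) + B sin (r t)) + O(e^{-t})`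
with `A = -∫₀^∞ cos (r s) q s ds`. The binomial series writes `q` as a sum of the exponentials
`e^{-(n + 1) s}` with nonnegative coefficients, the first being `1/2`; every cosine transform
`(n + 1) / ((n + 1)² + r²)` is positive, so `|A| ≥ 1 / (2 (1 + r²))`. The mean square of
`A cos (r t) + B sin (r t)` is `(A² + B²) / 2 + O(1 / T)`.
-/

open Set MeasureTheory Real

theorem hasSum_choose_mul_pow (a : ℝ) {x : ℝ} (hx : |x| < 1) :
    HasSum (fun n : ℕ ↦ Ring.choose a n * x ^ n) ((1 + x) ^ a) := by
  have hball : x ∈ Metric.eball (0 : ℝ) 1 := by simpa [← ofReal_norm]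
  simpa [binomialSeries, mul_comm] using
    one_add_rpow_hasFPowerSeriesOnBall_zero (a := a).hasSum hball

theorem hasSum_one_sub_one_sub_rpow (a : ℝ) {x : ℝ} (hx : |x| < 1) :
    HasSum (fun n : ℕ ↦ (-1) ^ n * Ring.choose a (n + 1) * x ^ (n + 1)) (1 - (1 - x) ^ a) := by
  have h := hasSum_choose_mul_pow a (x := -x) (by rwa [abs_neg])
  rw [← hasSum_nat_add_iff' 1] at h
  have hterm (n : ℕ) : (-1) ^ n * Ring.choose a (n + 1) * x ^ (n + 1) =
      -(Ring.choose a (n + 1) * (-x) ^ (n + 1)) := by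
    rw [neg_pow x]
    ring
  simpa only [hterm, Finset.sum_range_one, Ring.choose_zero_right, pow_zero, mul_one, neg_sub,
    ← sub_eq_add_neg] using h.neg

theorem neg_one_pow_mul_choose_succ_nonneg {a : ℝ} (ha0 : 0 ≤ a) (ha1 : a ≤ 1) (n : ℕ) :
    0 ≤ (-1) ^ n * Ring.choose a (n + 1) := by
  induction n with
  | zero => simpa using ha0
  | succ n ih =>
    have hrec : (n + 2) * Ring.choose a (n + 2) = (a - (n + 1)) * Ring.choose a (n + 1) := by
      have h := Ring.choose_smul_choose a (n + 1).le_succ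
      simp only [Nat.succ_eq_add_one, Nat.choose_succ_self_right, nsmul_eq_mul, Nat.cast_add,
        Nat.cast_one, add_tsub_cancel_left, Ring.choose_one_right', pow_one] at h
      linear_combination h
    have hfactor : 0 ≤ n + 1 - a := by linarith [(n.cast_nonneg : (0 : ℝ) ≤ n)]
    have hmul : (n + 2) * ((-1) ^ (n + 1) * Ring.choose a (n + 2)) =
        (n + 1 - a) * ((-1) ^ n * Ring.choose a (n + 1)) := by
      linear_combination (-1) ^ (n + 1) * hrec
    exact nonneg_of_mul_nonneg_right (hmul ▸ mul_nonneg hfactor ih) (by positivity)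

theorem sqrt_one_sub_exp_le_one (x : ℝ) : √(1 - exp x) ≤ 1 :=
  sqrt_le_one.2 (sub_le_self 1 (exp_pos x).le)

theorem one_sub_exp_le_sqrt_one_sub_exp {x : ℝ} (hx : x ≤ 0) : 1 - exp x ≤ √(1 - exp x) :=
  le_sqrt_of_sq_le <| pow_le_of_le_one (sub_nonneg.2 (exp_le_one_iff.2 hx))
    (sub_le_self 1 (exp_pos x).le) two_ne_zero

theorem integral_cos_mul_exp_neg_mul {b : ℝ} (hb : 0 < b) (r : ℝ) :
    ∫ s in Ioi 0, cos (r * s) * exp (-b * s) = b / (b ^ 2 + r ^ 2) := by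
  have hre : (-b + r * Complex.I).re < 0 := by simpa using hb
  have h := congrArg Complex.re (integral_exp_mul_complex_Ioi hre 0)
  rw [← RCLike.re_to_complex, ← integral_re (integrableOn_exp_mul_complex_Ioi hre 0)] at h
  simpa [Complex.exp_re, Complex.div_re, Complex.normSq_apply, mul_comm, sq] using h

theorem hasSum_integral_cos_mul_of_hasSum_exp {ι : Type*} [Countable ι] {b c : ι → ℝ} {f : ℝ → ℝ}
    (hb : ∀ i, 0 < b i) (hc : ∀ i, 0 ≤ c i)
    (hf : ∀ s ∈ Ioi 0, HasSum (fun i ↦ c i * exp (-b i * s)) (f s))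
    (hint : IntegrableOn f (Ioi 0)) (r : ℝ) :
    HasSum (fun i ↦ c i * (b i / (b i ^ 2 + r ^ 2))) (∫ s in Ioi 0, cos (r * s) * f s) := by
  have hterm (i : ι) : ∫ s in Ioi 0, cos (r * s) * (c i * exp (-b i * s)) =
      c i * (b i / (b i ^ 2 + r ^ 2)) := by
    simp_rw [mul_left_comm (cos _)]
    rw [integral_const_mul, integral_cos_mul_exp_neg_mul (hb i)]
  simp_rw [← hterm]
  have hsum : ∀ᵐ s ∂volume.restrict (Ioi (0 : ℝ)),
      HasSum (fun i ↦ c i * exp (-b i * s)) (f s) :=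
    (ae_restrict_mem measurableSet_Ioi).mono hf
  refine hasSum_integral_of_dominated_convergence (fun i s ↦ c i * exp (-b i * s))
    (fun i ↦ by fun_prop) (fun i ↦ .of_forall fun s ↦ ?_) (hsum.mono fun s hs ↦ hs.summable)
    (hint.congr (hsum.mono fun s hs ↦ hs.tsum_eq.symm)) (hsum.mono fun s hs ↦ hs.mul_left _)
  rw [norm_mul, norm_of_nonneg (mul_nonneg (hc i) (exp_pos _).le)]
  exact mul_le_of_le_one_left (mul_nonneg (hc i) (exp_pos _).le) (abs_cos_le_one _)

theorem integral_neg_eq_two_mul_of_even {f : ℝ → ℝ} (hf : Continuous f)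
    (heven : ∀ x, f (-x) = f x) (t : ℝ) : ∫ x in (-t)..t, f x = 2 * ∫ x in 0..t, f x := by
  have hneg : ∫ x in (-t)..0, f x = ∫ x in 0..t, f x := by
    simpa [heven] using (intervalIntegral.integral_comp_neg (a := 0) (b := t) f).symm
  rw [← intervalIntegral.integral_add_adjacent_intervals (hf.intervalIntegrable _ 0)
    (hf.intervalIntegrable _ _), hneg, two_mul]

theorem integral_cos_mul_sub {r : ℝ} (hr : r ≠ 0) (t : ℝ) :
    ∫ s in 0..t, cos (r * (t - s)) = r⁻¹ * sin (r * t) := by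
  rw [intervalIntegral.integral_comp_sub_left (fun x ↦ cos (r * x)),
    intervalIntegral.integral_comp_mul_left cos hr, integral_cos]
  simp

theorem integral_sq_cos_add_sin (α β θ : ℝ) :
    ∫ x in 0..θ, (α * cos x + β * sin x) ^ 2 =
      (α ^ 2 + β ^ 2) / 2 * θ +
        sin θ / 2 * ((α ^ 2 - β ^ 2) * cos θ + 2 * α * β * sin θ) := by
  calc ∫ x in 0..θ, (α * cos x + β * sin x) ^ 2
      = ∫ x in 0..θ, (α ^ 2 * cos x ^ 2 + β ^ 2 * sin x ^ 2 + 2 * α * β * (sin x * cos x)) := by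
        congr with x; ring
    _ = α ^ 2 * (∫ x in 0..θ, cos x ^ 2) + β ^ 2 * (∫ x in 0..θ, sin x ^ 2) +
          2 * α * β * ∫ x in 0..θ, sin x * cos x := by
        rw [intervalIntegral.integral_add, intervalIntegral.integral_add]
        · simp only [intervalIntegral.integral_const_mul]
        all_goals exact Continuous.intervalIntegrable (by fun_prop) _ _
    _ = _ := by
        rw [integral_cos_sq, integral_sin_sq, integral_sin_mul_cos₁]
        simp only [sin_zero]
        ring

theorem abs_sin_div_two_mul_le (α β θ : ℝ) :
    |sin θ / 2 * ((α ^ 2 - β ^ 2) * cos θ + 2 * α * β * sin θ)| ≤ (α ^ 2 + β ^ 2) / 2 := by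
  have h : |(α ^ 2 - β ^ 2) * cos θ + 2 * α * β * sin θ| ≤ α ^ 2 + β ^ 2 := by
    refine abs_le_of_sq_le_sq ?_ (by positivity)
    calc ((α ^ 2 - β ^ 2) * cos θ + 2 * α * β * sin θ) ^ 2
        ≤ ((α ^ 2 - β ^ 2) * cos θ + 2 * α * β * sin θ) ^ 2 +
            ((α ^ 2 - β ^ 2) * sin θ - 2 * α * β * cos θ) ^ 2 :=
          le_add_of_nonneg_right (sq_nonneg _)
      _ = (α ^ 2 + β ^ 2) ^ 2 := by
        linear_combination (α ^ 2 + β ^ 2) ^ 2 * sin_sq_add_cos_sq θ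
  rw [abs_mul, abs_div, abs_two]
  nlinarith [abs_sin_le_one θ, abs_nonneg (sin θ)]

theorem le_integral_sq_cos_add_sin (α β T : ℝ) {r : ℝ} (hr : r ≠ 0) :
    (α ^ 2 + β ^ 2) / 2 * (T - |r|⁻¹) ≤
      ∫ t in 0..T, (α * cos (r * t) + β * sin (r * t)) ^ 2 := by
  rw [intervalIntegral.integral_comp_mul_left (fun x ↦ (α * cos x + β * sin x) ^ 2) hr, mul_zero,
    integral_sq_cos_add_sin, smul_eq_mul]
  have h : |r⁻¹ * (sin (r * T) / 2 * ((α ^ 2 - β ^ 2) * cos (r * T) + 2 * α * β * sin (r * T)))|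
      ≤ |r|⁻¹ * ((α ^ 2 + β ^ 2) / 2) := by
    rw [abs_mul, abs_inv]
    gcongr
    exact abs_sin_div_two_mul_le α β (r * T)
  have hmain : r⁻¹ * ((α ^ 2 + β ^ 2) / 2 * (r * T)) = (α ^ 2 + β ^ 2) / 2 * T := by field_simp
  rw [mul_add, hmain]
  linarith [neg_le_of_abs_le h]

/-- The kernel `√2 e^{-t/2} √(cosh t - cosh u)` as a function of the distance `s = t - u` to the
edge of its support. -/
noncomputable def edgeKernel (t s : ℝ) : ℝ :=
  √((1 - exp (-s)) * (1 - exp (s - 2 * t)))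

@[fun_prop]
theorem continuous_edgeKernel {X : Type*} [TopologicalSpace X] {f g : X → ℝ}
    (hf : Continuous f) (hg : Continuous g) : Continuous fun x ↦ edgeKernel (f x) (g x) := by
  unfold edgeKernel
  fun_prop

theorem sqrt_two_mul_exp_mul_sqrt_cosh_sub_cosh (t s : ℝ) :
    √2 * exp (-t / 2) * √(cosh t - cosh (t - s)) = edgeKernel t s := by
  rw [exp_half, ← sqrt_mul zero_le_two, ← sqrt_mul (by positivity), edgeKernel]
  congr 1
  rw [cosh_eq, cosh_eq, show -(t - s) = s - t by ring, show s - 2 * t = s - t - t by ring]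
  simp only [exp_sub, exp_neg]
  field_simp
  ring

theorem selbergTransformBall_eq_edgeKernel (t r : ℝ) :
    selbergTransformBall t r = 4 * ∫ s in 0..t, cos (r * (t - s)) * edgeKernel t s := by
  unfold selbergTransformBall
  rw [integral_neg_eq_two_mul_of_even (by fun_prop) fun u ↦ by simp]
  simp_rw [← sqrt_two_mul_exp_mul_sqrt_cosh_sub_cosh]
  rw [intervalIntegral.integral_comp_sub_left
      (fun u ↦ cos (r * u) * (√2 * exp (-t / 2) * √(cosh t - cosh u))),
    sub_self, sub_zero, ← intervalIntegral.integral_const_mul,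
    ← intervalIntegral.integral_const_mul]
  congr with u
  ring

theorem continuous_selbergTransformBall (r : ℝ) : Continuous fun t ↦ selbergTransformBall t r := by
  simp_rw [selbergTransformBall_eq_edgeKernel]
  exact continuous_const.mul <|
    intervalIntegral.continuous_parametric_intervalIntegral_of_continuous
      (f := fun t s ↦ cos (r * (t - s)) * edgeKernel t s) (by fun_prop) continuous_id

/-- The defect `1 - lim_{t → ∞} edgeKernel t s`. -/
noncomputable def edgeDefect (s : ℝ) : ℝ :=
  1 - √(1 - exp (-s))

@[fun_prop]
theorem continuous_edgeDefect : Continuous edgeDefect := by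
  unfold edgeDefect
  fun_prop

theorem edgeDefect_nonneg (s : ℝ) : 0 ≤ edgeDefect s :=
  sub_nonneg.2 (sqrt_one_sub_exp_le_one _)

theorem edgeDefect_le_exp_neg {s : ℝ} (hs : 0 ≤ s) : edgeDefect s ≤ exp (-s) :=
  sub_le_comm.1 (one_sub_exp_le_sqrt_one_sub_exp (neg_nonpos.2 hs))

theorem norm_mul_edgeDefect_le {c s : ℝ} (hc : |c| ≤ 1) (hs : 0 ≤ s) :
    ‖c * edgeDefect s‖ ≤ exp (-s) := by
  rw [norm_mul, norm_of_nonneg (edgeDefect_nonneg s)]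
  exact (mul_le_of_le_one_left (edgeDefect_nonneg s) hc).trans (edgeDefect_le_exp_neg hs)

theorem integrableOn_mul_edgeDefect {w : ℝ → ℝ} (hw : Continuous w) (hw1 : ∀ s, |w s| ≤ 1) :
    IntegrableOn (fun s ↦ w s * edgeDefect s) (Ioi 0) :=
  (integrableOn_exp_neg_Ioi 0).mono' (by fun_prop) <|
    (ae_restrict_mem measurableSet_Ioi).mono fun s hs ↦ norm_mul_edgeDefect_le (hw1 s) (le_of_lt hs)

theorem abs_integral_Ioi_mul_edgeDefect_le {w : ℝ → ℝ} (hw : ∀ s, |w s| ≤ 1) {t : ℝ} (ht : 0 ≤ t) :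
    |∫ s in Ioi t, w s * edgeDefect s| ≤ exp (-t) := by
  rw [← integral_exp_neg_Ioi]
  exact norm_integral_le_of_norm_le (integrableOn_exp_neg_Ioi t) <|
    (ae_restrict_mem measurableSet_Ioi).mono fun s hs ↦
      norm_mul_edgeDefect_le (hw s) (ht.trans (le_of_lt hs))

theorem abs_edgeKernel_sub_one_sub_edgeDefect_le {t s : ℝ} (hs : 0 ≤ s) (hst : s ≤ 2 * t) :
    |edgeKernel t s - (1 - edgeDefect s)| ≤ exp (s - 2 * t) := by
  have hle : 0 ≤ 1 - √(1 - exp (s - 2 * t)) := sub_nonneg.2 (sqrt_one_sub_exp_le_one _)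
  calc |edgeKernel t s - (1 - edgeDefect s)|
      = √(1 - exp (-s)) * (1 - √(1 - exp (s - 2 * t))) := by
        rw [edgeKernel, edgeDefect, sqrt_mul (sub_nonneg.2 <| exp_le_one_iff.2 (neg_nonpos.2 hs)),
          sub_sub_cancel, abs_sub_comm, ← mul_one_sub,
          abs_of_nonneg (mul_nonneg (sqrt_nonneg _) hle)]
    _ ≤ 1 - √(1 - exp (s - 2 * t)) := mul_le_of_le_one_left hle (sqrt_one_sub_exp_le_one _)
    _ ≤ exp (s - 2 * t) :=
        sub_le_comm.1 (one_sub_exp_le_sqrt_one_sub_exp (sub_nonpos.2 hst))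

theorem abs_integral_mul_edgeKernel_sub_one_sub_edgeDefect_le {w : ℝ → ℝ} (hw : ∀ s, |w s| ≤ 1)
    {t : ℝ} (ht : 0 ≤ t) :
    |∫ s in 0..t, w s * (edgeKernel t s - (1 - edgeDefect s))| ≤ exp (-t) := by
  rw [← norm_eq_abs]
  calc ‖∫ s in 0..t, w s * (edgeKernel t s - (1 - edgeDefect s))‖
      ≤ ∫ s in 0..t, exp (s - 2 * t) := by
        refine intervalIntegral.norm_integral_le_of_norm_le ht (.of_forall fun s hs ↦ ?_)
          (Continuous.intervalIntegrable (by fun_prop) _ _)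
        rw [norm_mul, norm_eq_abs, norm_eq_abs]
        exact (mul_le_of_le_one_left (abs_nonneg _) (hw s)).trans
          (abs_edgeKernel_sub_one_sub_edgeDefect_le hs.1.le (by linarith [hs.2]))
    _ = exp (-t) - exp (-(2 * t)) := by
        rw [intervalIntegral.integral_comp_sub_right (fun x ↦ exp x), integral_exp]
        ring_nf
    _ ≤ exp (-t) := sub_le_self _ (exp_pos _).le

theorem abs_integral_mul_edgeKernel_sub_le {w : ℝ → ℝ} (hw : Continuous w)
    (hw1 : ∀ s, |w s| ≤ 1) {t : ℝ} (ht : 0 ≤ t) :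
    |(∫ s in 0..t, w s * edgeKernel t s) -
      ((∫ s in 0..t, w s) - ∫ s in Ioi 0, w s * edgeDefect s)| ≤ 2 * exp (-t) := by
  have hint := integrableOn_mul_edgeDefect hw hw1
  have htail : ∫ s in Ioi 0, w s * edgeDefect s =
      (∫ s in 0..t, w s * edgeDefect s) + ∫ s in Ioi t, w s * edgeDefect s :=
    (intervalIntegral.integral_interval_add_Ioi hint (hint.mono_set (Ioi_subset_Ioi ht))).symm
  have hkernel : ∫ s in 0..t, w s * (edgeKernel t s - (1 - edgeDefect s)) =
      (∫ s in 0..t, w s * edgeKernel t s) -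
        ((∫ s in 0..t, w s) - ∫ s in 0..t, w s * edgeDefect s) := by
    rw [← intervalIntegral.integral_sub, ← intervalIntegral.integral_sub]
    · congr with s
      ring
    all_goals exact Continuous.intervalIntegrable (by fun_prop) _ _
  calc |(∫ s in 0..t, w s * edgeKernel t s) -
        ((∫ s in 0..t, w s) - ∫ s in Ioi 0, w s * edgeDefect s)|
      = |(∫ s in 0..t, w s * (edgeKernel t s - (1 - edgeDefect s))) +
          ∫ s in Ioi t, w s * edgeDefect s| := by
        rw [hkernel, htail]
        ring_nf
    _ ≤ exp (-t) + exp (-t) := (abs_add_le _ _).trans <|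
        add_le_add (abs_integral_mul_edgeKernel_sub_one_sub_edgeDefect_le hw1 ht)
          (abs_integral_Ioi_mul_edgeDefect_le hw1 ht)
    _ = 2 * exp (-t) := (two_mul _).symm

theorem integral_Ioi_cos_mul_sub_mul_edgeDefect (r t : ℝ) :
    ∫ s in Ioi 0, cos (r * (t - s)) * edgeDefect s =
      (∫ s in Ioi 0, cos (r * s) * edgeDefect s) * cos (r * t) +
        (∫ s in Ioi 0, sin (r * s) * edgeDefect s) * sin (r * t) := by
  rw [← integral_mul_const, ← integral_mul_const, ← integral_add
    ((integrableOn_mul_edgeDefect (w := fun s ↦ cos (r * s)) (by fun_prop)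
      fun s ↦ abs_cos_le_one _).mul_const _)
    ((integrableOn_mul_edgeDefect (w := fun s ↦ sin (r * s)) (by fun_prop)
      fun s ↦ abs_sin_le_one _).mul_const _)]
  congr with s
  rw [mul_sub, cos_sub]
  ring

/-- The amplitude of `cos (r t)` in the large-time asymptotics of `h_t(r) / 4`. -/
noncomputable def cosAmplitude (r : ℝ) : ℝ :=
  -∫ s in Ioi 0, cos (r * s) * edgeDefect s

/-- The amplitude of `sin (r t)` in the large-time asymptotics of `h_t(r) / 4`, for `r ≠ 0`. -/
noncomputable def sinAmplitude (r : ℝ) : ℝ :=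
  r⁻¹ - ∫ s in Ioi 0, sin (r * s) * edgeDefect s

theorem abs_selbergTransformBall_sub_le {r t : ℝ} (hr : r ≠ 0) (ht : 0 ≤ t) :
    |selbergTransformBall t r - 4 * (cosAmplitude r * cos (r * t) + sinAmplitude r * sin (r * t))|
      ≤ 8 * exp (-t) := by
  have h := abs_integral_mul_edgeKernel_sub_le (w := fun s ↦ cos (r * (t - s))) (by fun_prop)
    (fun s ↦ abs_cos_le_one _) ht
  rw [integral_cos_mul_sub hr, integral_Ioi_cos_mul_sub_mul_edgeDefect] at h
  have hamplitude : r⁻¹ * sin (r * t) -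
      ((∫ s in Ioi 0, cos (r * s) * edgeDefect s) * cos (r * t) +
        (∫ s in Ioi 0, sin (r * s) * edgeDefect s) * sin (r * t)) =
      cosAmplitude r * cos (r * t) + sinAmplitude r * sin (r * t) := by
    rw [cosAmplitude, sinAmplitude]
    ring
  rw [selbergTransformBall_eq_edgeKernel, ← mul_sub, abs_mul,
    abs_of_pos (by norm_num : (0 : ℝ) < 4)]
  calc 4 * |(∫ s in 0..t, cos (r * (t - s)) * edgeKernel t s) -
        (cosAmplitude r * cos (r * t) + sinAmplitude r * sin (r * t))|
      ≤ 4 * (2 * exp (-t)) := by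
        gcongr
        rwa [hamplitude] at h
    _ = 8 * exp (-t) := by ring

theorem hasSum_edgeDefect {s : ℝ} (hs : 0 < s) :
    HasSum (fun n : ℕ ↦ (-1) ^ n * Ring.choose (1 / 2 : ℝ) (n + 1) * exp (-(n + 1) * s))
      (edgeDefect s) := by
  have hlt : |exp (-s)| < 1 := by rwa [abs_exp, exp_lt_one_iff, neg_lt_zero]
  have hpow (n : ℕ) : exp (-(n + 1) * s) = exp (-s) ^ (n + 1) := by
    rw [← exp_nat_mul]
    push_cast
    ring_nf
  simpa only [hpow, edgeDefect, sqrt_eq_rpow] using hasSum_one_sub_one_sub_rpow (1 / 2) hlt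

theorem le_integral_cos_mul_edgeDefect (r : ℝ) :
    1 / (2 * (1 + r ^ 2)) ≤ ∫ s in Ioi 0, cos (r * s) * edgeDefect s := by
  have hcoeff : ∀ n, 0 ≤ (-1) ^ n * Ring.choose (1 / 2 : ℝ) (n + 1) :=
    neg_one_pow_mul_choose_succ_nonneg (by norm_num) (by norm_num)
  have hint : IntegrableOn edgeDefect (Ioi 0) := by
    simpa using integrableOn_mul_edgeDefect (w := fun _ ↦ 1) continuous_const (by simp)
  have hsum := hasSum_integral_cos_mul_of_hasSum_exp (fun n ↦ n.cast_add_one_pos) hcoeff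
    (fun s ↦ hasSum_edgeDefect) hint r
  have hfirst := le_hasSum hsum 0 fun n _ ↦ mul_nonneg (hcoeff n) (by positivity)
  refine le_of_eq_of_le ?_ hfirst
  simp [field]

theorem one_div_sq_le_cosAmplitude_sq (r : ℝ) :
    (1 / (2 * (1 + r ^ 2))) ^ 2 ≤ cosAmplitude r ^ 2 := by
  rw [cosAmplitude, neg_sq]
  gcongr
  exact le_integral_cos_mul_edgeDefect r

theorem integral_exp_neg_sq_le (T : ℝ) : ∫ t in 0..T, exp (-t) ^ 2 ≤ 1 / 2 := by
  have hderiv : ∀ t ∈ uIcc 0 T, HasDerivAt (fun t ↦ -exp (-t) ^ 2 / 2) (exp (-t) ^ 2) t := by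
    intro t _
    convert! (((hasDerivAt_neg t).exp.pow 2).neg.div_const 2) using 1
    ring
  rw [intervalIntegral.integral_eq_sub_of_hasDerivAt hderiv
    (Continuous.intervalIntegrable (by fun_prop) _ _), neg_zero, exp_zero]
  linarith [sq_nonneg (exp (-T))]

theorem le_integral_sq_selbergTransformBall {r T : ℝ} (hr : r ≠ 0) (hT : |r|⁻¹ ≤ T) :
    (T - |r|⁻¹) / (1 + r ^ 2) ^ 2 - 32 ≤ ∫ t in 0..T, |selbergTransformBall t r| ^ 2 := by
  set A := cosAmplitude r
  set B := sinAmplitude r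
  have hpointwise (t : ℝ) (ht : t ∈ Icc 0 T) :
      8 * (A * cos (r * t) + B * sin (r * t)) ^ 2 - 64 * exp (-t) ^ 2 ≤
        |selbergTransformBall t r| ^ 2 := by
    have herr := sq_le_sq.2 ((abs_selbergTransformBall_sub_le hr ht.1).trans (le_abs_self _))
    rw [sq_abs]
    -- With `h` the transform and `x` its main term, `2 h² + 2 (h - x)² - x² = (2 h - x)² ≥ 0`.
    nlinarith [sq_nonneg (2 * selbergTransformBall t r - 4 * (A * cos (r * t) + B * sin (r * t)))]
  have hamplitude : (1 / (2 * (1 + r ^ 2))) ^ 2 ≤ A ^ 2 + B ^ 2 :=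
    (one_div_sq_le_cosAmplitude_sq r).trans (le_add_of_nonneg_right (sq_nonneg B))
  calc (T - |r|⁻¹) / (1 + r ^ 2) ^ 2 - 32
      = 8 * ((1 / (2 * (1 + r ^ 2))) ^ 2 / 2 * (T - |r|⁻¹)) - 64 * (1 / 2) := by
        field_simp
        ring
    _ ≤ 8 * ((A ^ 2 + B ^ 2) / 2 * (T - |r|⁻¹)) - 64 * (1 / 2) := by
        gcongr
    _ ≤ 8 * (∫ t in 0..T, (A * cos (r * t) + B * sin (r * t)) ^ 2) -
          64 * ∫ t in 0..T, exp (-t) ^ 2 := by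
        gcongr
        · exact le_integral_sq_cos_add_sin A B T hr
        · exact integral_exp_neg_sq_le T
    _ = ∫ t in 0..T, (8 * (A * cos (r * t) + B * sin (r * t)) ^ 2 - 64 * exp (-t) ^ 2) := by
        rw [intervalIntegral.integral_sub (Continuous.intervalIntegrable (by fun_prop) _ _)
          (Continuous.intervalIntegrable (by fun_prop) _ _), intervalIntegral.integral_const_mul,
          intervalIntegral.integral_const_mul]
    _ ≤ ∫ t in 0..T, |selbergTransformBall t r| ^ 2 :=
        intervalIntegral.integral_mono_on ((inv_nonneg.2 (abs_nonneg r)).trans hT)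
          (Continuous.intervalIntegrable (by fun_prop) _ _)
          (((continuous_selbergTransformBall r).abs.pow 2).intervalIntegrable _ _) hpointwise

/-- **Lower bound for the time-averaged spectral action (Lemma 3.2 of the paper).**
For every compact interval `I = [a, b] ⊂ (1/4, ∞)` there exist constants `C_I > 0` and
`T_I > 0` such that for all `T > T_I` and all `r ∈ ℝ` with `1/4 + r² ∈ I`,
`(1/T) ∫₀^T |h_t(r)|² dt ≥ C_I`. -/
theorem spectral_action_lower_bound (a b : ℝ) (ha : 1 / 4 < a) :
    ∃ C : ℝ, 0 < C ∧ ∃ T₀ : ℝ, 0 < T₀ ∧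
      ∀ T : ℝ, T₀ < T →
        ∀ r : ℝ, 1 / 4 + r ^ 2 ∈ Set.Icc a b →
          C ≤ (1 / T) * ∫ t in (0 : ℝ)..T, |selbergTransformBall t r| ^ 2 := by
  set ρ := √(a - 1 / 4)
  set M := 1 + |b|
  have hρ : 0 < ρ := sqrt_pos.2 (by linarith)
  have hM : 0 < M := by positivity
  refine ⟨1 / (2 * M ^ 2), by positivity, 2 * (ρ⁻¹ + 32 * M ^ 2), by positivity,
    fun T hT r hr ↦ ?_⟩
  have hρr : ρ ≤ |r| := (sqrt_le_left (abs_nonneg r)).2 (by rw [sq_abs]; linarith [hr.1])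
  have hrM : 1 + r ^ 2 ≤ M := by linarith [hr.2, le_abs_self b]
  have hrinv : |r|⁻¹ ≤ ρ⁻¹ := inv_anti₀ hρ hρr
  have hTr : 32 * M ^ 2 + T / 2 ≤ T - |r|⁻¹ := by linarith
  have hT0 : 0 < T := lt_trans (by positivity) hT
  have hTinv : |r|⁻¹ ≤ T := by linarith [sq_nonneg M]
  rw [one_div_mul_eq_div, le_div_iff₀ hT0]
  calc 1 / (2 * M ^ 2) * T = (32 * M ^ 2 + T / 2) / M ^ 2 - 32 := by
        field_simp
        ring
    _ ≤ (T - |r|⁻¹) / (1 + r ^ 2) ^ 2 - 32 := by gcongr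
    _ ≤ ∫ t in (0 : ℝ)..T, |selbergTransformBall t r| ^ 2 :=
        le_integral_sq_selbergTransformBall (abs_pos.1 (hρ.trans_le hρr)) hTinv
end

section
/- There exists a universal constant C > 0 with the following property. Let Γ be a countable subgroup of SL(2,ℝ) acting freely on ℍ by Möbius transformations (γ·z = z for some z ∈ ℍ implies γ = 1), and let F ⊆ ℍ be a measurable fundamental domain for this action with respect to the hyperbolic area measure μ (the translates γ·F, γ ∈ Γ, are pairwise μ-a.e. disjoint and their union covers ℍ up to a μ-null set). Let K : ℍ × ℍ → ℝ be a bounded measurable kernel invariant under the diagonal action of Γ, i.e. K(γ·z, γ·w) = K(z,w) for all γ ∈ Γ and all z, w ∈ ℍ. Fix R > 0 and ε > 0 and assume: (i) K(z,w) = 0 whenever d(z,w) > R; (ii) for every w ∈ ℍ such that K(z,w) ≠ 0 for some z ∈ ℍ, and every γ ∈ Γ with γ ≠ 1, one has d(w, γ·w) ≥ 2ε. Then ∫_F ∫_F |Σ_{γ∈Γ} K(z, γ·w)|² dμ(w) dμ(z) ≤ ∫_F ∫_ℍ |K(z,w)|² dμ(w) dμ(z) + C · (e^{2R} / min{1, ε²})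 · μ(F_{≤R}) · sup_{(z,w)∈F×ℍ} |K(z,w)|², where F_{≤R} := {z ∈ F : there exists γ ∈ Γ, γ ≠ 1, with d(z, γ·z) ≤ 2R}. -/
open MeasureTheory UpperHalfPlane

/-- The Borel measurable structure on the upper half-plane, induced from `ℂ`. -/
noncomputable instance : MeasurableSpace UpperHalfPlane :=
  MeasurableSpace.comap ((↑) : ℍ → ℂ) inferInstance

/-- The hyperbolic area measure on the upper half-plane: the measure with density
`(Im z)⁻²` with respect to the two-dimensional Lebesgue measure. -/
noncomputable def hypArea : Measure ℍ :=
  (Measure.comap ((↑) : ℍ → ℂ) volume).withDensity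
    (fun z => ENNReal.ofReal (1 / z.im ^ 2))

/-!
Only boundedly many terms of the orbit sum `∑ γ, K z (γ • w)` are nonzero: the contributing points
`γ • w` lie within `R` of `z` and are `2ε`-separated, so disjoint balls of radius `min 1 ε` pack
into a ball of radius `R + 1`, and there are `O(e ^ R / min 1 ε ^ 2)` of them. Cauchy–Schwarz bounds
the square of the sum by the number `N` of nonzero terms times the sum of the squares. Off the
thin part `N ≤ 1`, since two contributing translates of `w` are at distance at most `2R`, and
unfolding the sum over `w ∈ F` gives `∫_F ∫_ℍ |K| ^ 2`. For `w` in the thin part, unfold over `z`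
instead: the sum of the squares integrates to at most `sup |K| ^ 2` times the area of a ball of
radius `R`, which is `O(e ^ R)`.
-/

open scoped ENNReal Pointwise Real
open Function Metric Set

theorem sq_tsum_le_encard_support_mul_tsum_sq {ι : Type*} (a : ι → ℝ≥0∞) :
    (∑' i, a i) ^ 2 ≤ (support a).encard * ∑' i, a i ^ 2 := by
  rcases (support a).finite_or_infinite with hfin | hinf
  · have sum_sq_le : (∑ i ∈ hfin.toFinset, a i) ^ 2 ≤
        hfin.toFinset.card * ∑ i ∈ hfin.toFinset, a i ^ 2 := by
      simpa [show (2 : ℝ) - 1 = 1 by norm_num] using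
        ENNReal.rpow_sum_le_const_mul_sum_rpow hfin.toFinset a one_le_two
    rw [tsum_eq_sum (s := hfin.toFinset) (by simp), hfin.encard_eq_coe_toFinset_card]
    exact sum_sq_le.trans (by gcongr; exacts [by simp, ENNReal.sum_le_tsum _])
  · obtain ⟨i, hi⟩ := hinf.nonempty
    have tsum_ne_zero : ∑' i, a i ^ 2 ≠ 0 := fun h =>
      hi (by simpa using ENNReal.tsum_eq_zero.1 h i)
    simp [hinf.encard_eq, ENNReal.top_mul tsum_ne_zero]

instance {G X : Type*} [Group G] [PseudoEMetricSpace X] [MulAction G X] [IsIsometricSMul G X]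
    (H : Subgroup G) : IsIsometricSMul H X :=
  ⟨fun h => isometry_smul X (h : G)⟩

section Packing

variable {ι X : Type*} [PseudoMetricSpace X]

theorem encard_mul_le_measure_closedBall [MeasurableSpace X] [OpensMeasurableSpace X]
    {μ : Measure X} {p : ι → X} {s : Set ι} {z : X} {R r : ℝ} {v : ℝ≥0∞}
    (hR : ∀ i ∈ s, dist z (p i) ≤ R)
    (hsep : s.Pairwise fun i j => 2 * r ≤ dist (p i) (p j))
    (hv : ∀ i ∈ s, v ≤ μ (ball (p i) r)) :
    s.encard * v ≤ μ (closedBall z (R + r)) := by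
  have hdisj : Pairwise (Disjoint on fun i : s => ball (p i) r) := fun i j hij =>
    ball_disjoint_ball <|
      (two_mul r).symm.trans_le (hsep i.2 j.2 (Subtype.coe_ne_coe.2 hij))
  have hsub : ⋃ i : s, ball (p i) r ⊆ closedBall z (R + r) :=
    iUnion_subset fun i => ball_subset_closedBall.trans <|
      closedBall_subset_closedBall' (by linarith [hR i i.2, dist_comm z (p i)])
  calc (s.encard : ℝ≥0∞) * v = ∑' _ : s, v := by rw [ENNReal.tsum_const, ENat.card_coe_set_eq]
    _ ≤ ∑' i : s, μ (ball (p i) r) := ENNReal.tsum_le_tsum fun i => hv i i.2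
    _ ≤ μ (⋃ i : s, ball (p i) r) :=
      tsum_meas_le_meas_iUnion_of_disjoint μ (fun _ => measurableSet_ball) hdisj
    _ ≤ μ (closedBall z (R + r)) := measure_mono hsub

variable {G M : Type*} [Group G] [MulAction G X] [Zero M] {f : X → M} {R δ : ℝ}

theorem pairwise_le_dist_smul_of_ne_zero
    (hsep : ∀ w, f w ≠ 0 → ∀ g : G, g ≠ 1 → δ ≤ dist w (g • w)) (w : X) :
    (support fun g : G => f (g • w)).Pairwise fun g h => δ ≤ dist (g • w) (h • w) := by
  intro g hg h _ hne
  simpa [mul_smul] using hsep (g • w) hg (h * g⁻¹) fun h1 => hne (mul_inv_eq_one.1 h1).symm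

theorem encard_support_smul_le_one [IsIsometricSMul G X] {z w : X}
    (hf : ∀ x, R < dist z x → f x = 0) (hw : ∀ g : G, g ≠ 1 → 2 * R < dist w (g • w)) :
    (support fun g : G => f (g • w)).encard ≤ 1 := by
  refine encard_le_one_iff.2 fun g h hg hh => by_contra fun hne => ?_
  have hdist : ∀ {x}, f x ≠ 0 → dist z x ≤ R := fun hx => not_lt.1 fun hlt => hx (hf _ hlt)
  have hgh : 2 * R < dist (g • w) (h • w) := by
    simpa [mul_smul, ← dist_smul g w] using hw (g⁻¹ * h) fun h1 => hne (inv_mul_eq_one.1 h1)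
  linarith [dist_triangle_left (g • w) (h • w) z, hdist hg, hdist hh]

end Packing

section Automorphic

variable {G X : Type*} [Group G] [MulAction G X]

/-- The automorphic kernel `∑ g, k z (g • w)` obtained by summing a point-pair kernel `k` over
the second orbit. Values are taken in `ℝ≥0∞`, so the sum exists unconditionally; signed or
vector-valued kernels enter through their norms. -/
noncomputable def automorphicKernel (G : Type*) {X : Type*} [SMul G X] (k : X → X → ℝ≥0∞)
    (z w : X) : ℝ≥0∞ :=
  ∑' g : G, k z (g • w)

/-- The `R`-thin part `F_{≤R}` of `F`: the points that some nontrivial `g` displaces by at most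
`2 * R`, i.e. those where the injectivity radius of the quotient is at most `R`. -/
def thinPart (G : Type*) {X : Type*} [One G] [Dist X] [SMul G X] (F : Set X) (R : ℝ) : Set X :=
  {z ∈ F | ∃ g : G, g ≠ 1 ∧ dist z (g • z) ≤ 2 * R}

theorem automorphicKernel_sq_le [PseudoMetricSpace X] [IsIsometricSMul G X] {F : Set X}
    {k : X → X → ℝ≥0∞} {R : ℝ} {N : ℝ≥0∞} {z w : X}
    (hR : ∀ w, R < dist z w → k z w = 0)
    (hN : (support fun g : G => k z (g • w)).encard ≤ N) (hw : w ∈ F) :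
    automorphicKernel G k z w ^ 2 ≤ automorphicKernel G (fun z w => k z w ^ 2) z w +
      (thinPart G F R).indicator
        (fun w => N * automorphicKernel G (fun z w => k z w ^ 2) z w) w := by
  refine (sq_tsum_le_encard_support_mul_tsum_sq fun g : G => k z (g • w)).trans ?_
  by_cases hthin : w ∈ thinPart G F R
  · rw [indicator_of_mem hthin]
    exact le_add_left (by gcongr; exact le_rfl)
  · have hone : (support fun g : G => k z (g • w)).encard ≤ 1 :=
      encard_support_smul_le_one hR fun g hg => not_le.1 fun hle => hthin ⟨hw, g, hg, hle⟩
    refine le_add_right ((mul_le_mul_left (ENat.toENNReal_le.2 hone) _).trans_eq ?_)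
    rw [ENat.toENNReal_one, one_mul]; rfl

variable [MeasurableSpace X] [MeasurableConstSMul G X] [Countable G]
  {μ : Measure X} {F : Set X} {k : X → X → ℝ≥0∞}

theorem lintegral_tsum_smul_le_lintegral [SMulInvariantMeasure G X μ] (hF : NullMeasurableSet F μ)
    (hdisj : Pairwise (AEDisjoint μ on fun g : G => g • F)) {f : X → ℝ≥0∞} (hf : Measurable f) :
    ∫⁻ x in F, ∑' g : G, f (g • x) ∂μ ≤ ∫⁻ x, f x ∂μ :=
  calc ∫⁻ x in F, ∑' g : G, f (g • x) ∂μ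
      = ∑' g : G, ∫⁻ x in F, f (g • x) ∂μ :=
        lintegral_tsum fun g => (hf.comp (measurable_const_smul g)).aemeasurable
    _ = ∑' g : G, ∫⁻ x in g • F, f x ∂μ :=
        tsum_congr fun g => (measurePreserving_smul g μ).setLIntegral_comp_emb
          (measurableEmbedding_const_smul g) f F
    _ = ∫⁻ x in ⋃ g : G, g • F, f x ∂μ :=
        (lintegral_iUnion₀ (fun g => hF.smul g) hdisj f).symm
    _ ≤ ∫⁻ x, f x ∂μ := setLIntegral_le_lintegral _ _

theorem measurable_uncurry_automorphicKernel (hk : Measurable (uncurry k)) :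
    Measurable (uncurry (automorphicKernel G k)) :=
  Measurable.tsum fun g =>
    hk.comp (measurable_fst.prodMk (measurable_snd.const_smul g))

theorem measurableSet_thinPart [PseudoMetricSpace X] [SecondCountableTopology X]
    [OpensMeasurableSpace X] (hF : MeasurableSet F) (R : ℝ) :
    MeasurableSet (thinPart G F R) := by
  have thinPart_eq : thinPart G F R = F ∩ ⋃ g : G, {z | g ≠ 1 ∧ dist z (g • z) ≤ 2 * R} := by
    ext; simp [thinPart]
  rw [thinPart_eq]
  exact hF.inter <| .iUnion fun g => (MeasurableSet.const _).inter <|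
    measurableSet_le (measurable_id.dist (measurable_const_smul g)) measurable_const

section Isometric

variable [PseudoMetricSpace X] [OpensMeasurableSpace X] [IsIsometricSMul G X]
  [SMulInvariantMeasure G X μ] {R : ℝ} {S : ℝ≥0∞}

theorem lintegral_automorphicKernel_left_le (hF : MeasurableSet F)
    (hdisj : Pairwise (AEDisjoint μ on fun g : G => g • F))
    (hR : ∀ z w, R < dist z w → k z w = 0) (hS : ∀ z ∈ F, ∀ w, k z w ≤ S) (w : X) :
    ∫⁻ z in F, automorphicKernel G k z w ∂μ ≤ S * μ (closedBall w R) := by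
  have kernel_le_indicator : ∀ z ∈ F, ∀ g : G,
      k z (g⁻¹ • w) ≤ (closedBall w R).indicator (fun _ => S) (g • z) := by
    intro z hz g
    by_cases hgz : g • z ∈ closedBall w R
    · simpa [hgz] using hS z hz (g⁻¹ • w)
    · have hdist : R < dist z (g⁻¹ • w) := by
        rw [← dist_smul g, smul_inv_smul]
        simpa using hgz
      simp [hR _ _ hdist]
  calc ∫⁻ z in F, automorphicKernel G k z w ∂μ
      = ∫⁻ z in F, ∑' g : G, k z (g⁻¹ • w) ∂μ := by
        simp only [automorphicKernel, ← (Equiv.inv G).tsum_eq fun g => k _ (g • w), Equiv.inv_apply]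
    _ ≤ ∫⁻ z in F, ∑' g : G, (closedBall w R).indicator (fun _ => S) (g • z) ∂μ :=
        setLIntegral_mono' hF fun z hz => ENNReal.tsum_le_tsum (kernel_le_indicator z hz)
    _ ≤ ∫⁻ z, (closedBall w R).indicator (fun _ => S) z ∂μ :=
        lintegral_tsum_smul_le_lintegral hF.nullMeasurableSet hdisj
          (measurable_const.indicator measurableSet_closedBall)
    _ = S * μ (closedBall w R) := lintegral_indicator_const measurableSet_closedBall S

theorem lintegral_automorphicKernel_sq_le [SecondCountableTopology X] {N : ℝ≥0∞}
    (hF : MeasurableSet F) (hdisj : Pairwise (AEDisjoint μ on fun g : G => g • F)) {z : X}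
    (hk : Measurable (k z)) (hR : ∀ w, R < dist z w → k z w = 0)
    (hN : ∀ w, (support fun g : G => k z (g • w)).encard ≤ N) :
    ∫⁻ w in F, automorphicKernel G k z w ^ 2 ∂μ ≤ ∫⁻ w, k z w ^ 2 ∂μ +
      ∫⁻ w in thinPart G F R, N * automorphicKernel G (fun z w => k z w ^ 2) z w ∂μ := by
  set Q : X → ℝ≥0∞ := automorphicKernel G (fun z w => k z w ^ 2) z
  have hQ : Measurable Q := .tsum fun g => (hk.comp (measurable_const_smul g)).pow_const 2
  have hthin : MeasurableSet (thinPart G F R) := measurableSet_thinPart hF R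
  calc ∫⁻ w in F, automorphicKernel G k z w ^ 2 ∂μ
      ≤ ∫⁻ w in F, Q w + (thinPart G F R).indicator (fun w => N * Q w) w ∂μ :=
        setLIntegral_mono' hF fun w hw => automorphicKernel_sq_le hR (hN w) hw
    _ = ∫⁻ w in F, Q w ∂μ + ∫⁻ w in F, (thinPart G F R).indicator (fun w => N * Q w) w ∂μ :=
        lintegral_add_left hQ _
    _ ≤ ∫⁻ w, k z w ^ 2 ∂μ + ∫⁻ w, (thinPart G F R).indicator (fun w => N * Q w) w ∂μ :=
        add_le_add
          (lintegral_tsum_smul_le_lintegral hF.nullMeasurableSet hdisj (hk.pow_const 2))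
          (setLIntegral_le_lintegral _ _)
    _ = ∫⁻ w, k z w ^ 2 ∂μ + ∫⁻ w in thinPart G F R, N * Q w ∂μ := by
        rw [lintegral_indicator hthin]

theorem lintegral_lintegral_automorphicKernel_sq_le [SecondCountableTopology X] [SFinite μ]
    {N V : ℝ≥0∞} (hF : MeasurableSet F) (hdisj : Pairwise (AEDisjoint μ on fun g : G => g • F))
    (hk : Measurable (uncurry k)) (hR : ∀ z w, R < dist z w → k z w = 0)
    (hN : ∀ z w, (support fun g : G => k z (g • w)).encard ≤ N)
    (hV : ∀ w, μ (closedBall w R) ≤ V) (hS : ∀ z ∈ F, ∀ w, k z w ^ 2 ≤ S) :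
    ∫⁻ z in F, ∫⁻ w in F, automorphicKernel G k z w ^ 2 ∂μ ∂μ ≤
      ∫⁻ z in F, ∫⁻ w, k z w ^ 2 ∂μ ∂μ + N * (S * V) * μ (thinPart G F R) := by
  have hk2 : Measurable (uncurry fun z w => k z w ^ 2) := hk.pow_const 2
  set Q : X → X → ℝ≥0∞ := automorphicKernel G fun z w => k z w ^ 2
  have hQ : Measurable (uncurry Q) := measurable_uncurry_automorphicKernel hk2
  have column_le (w : X) : ∫⁻ z in F, N * Q z w ∂μ ≤ N * (S * V) := by
    rw [lintegral_const_mul _ hQ.of_uncurry_right]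
    gcongr
    refine (lintegral_automorphicKernel_left_le (R := R) hF hdisj (fun z w h => ?_) hS w).trans ?_
    · simp [hR z w h]
    · gcongr
      exact hV w
  calc ∫⁻ z in F, ∫⁻ w in F, automorphicKernel G k z w ^ 2 ∂μ ∂μ
      ≤ ∫⁻ z in F, ∫⁻ w, k z w ^ 2 ∂μ + ∫⁻ w in thinPart G F R, N * Q z w ∂μ ∂μ :=
        lintegral_mono fun z =>
          lintegral_automorphicKernel_sq_le hF hdisj hk.of_uncurry_left (hR z) (hN z)
    _ = ∫⁻ z in F, ∫⁻ w, k z w ^ 2 ∂μ ∂μ +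
          ∫⁻ z in F, ∫⁻ w in thinPart G F R, N * Q z w ∂μ ∂μ :=
        lintegral_add_left hk2.lintegral_prod_right _
    _ = ∫⁻ z in F, ∫⁻ w, k z w ^ 2 ∂μ ∂μ +
          ∫⁻ w in thinPart G F R, ∫⁻ z in F, N * Q z w ∂μ ∂μ := by
        rw [lintegral_lintegral_swap (f := fun z w => N * Q z w) (hQ.const_mul N).aemeasurable]
    _ ≤ ∫⁻ z in F, ∫⁻ w, k z w ^ 2 ∂μ ∂μ + N * (S * V) * μ (thinPart G F R) := by
        gcongr
        exact (lintegral_mono column_le).trans_eq (setLIntegral_const _ _)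

end Isometric

end Automorphic

section HyperbolicArea

theorem hypArea_eq_volume : hypArea = (volume : Measure ℍ) := by
  rw [hypArea, volume_def]
  congr 1 with z
  rw [ENNReal.ofReal]
  congr 1
  ext
  simp [z.im_pos.le]

instance : SFinite hypArea :=
  hypArea_eq_volume ▸ (inferInstance : SFinite (volume : Measure ℍ))

instance : SMulInvariantMeasure (Matrix.SpecialLinearGroup (Fin 2) ℝ) ℍ hypArea where
  measure_preimage_smul g _ _ :=
    hypArea_eq_volume ▸ measure_preimage_smul (volume : Measure ℍ) (g : GL (Fin 2) ℝ) _

theorem hypArea_apply (s : Set ℍ) :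
    hypArea s = ∫⁻ z : ℂ in (↑) '' s, ENNReal.ofReal (1 / z.im ^ 2) := by
  rw [hypArea_eq_volume]
  refine (volume_eq_lintegral s).trans (lintegral_congr fun z => ?_)
  rw [ENNReal.ofReal]
  congr 1
  ext
  simp [Real.coe_toNNReal', sq_nonneg]

theorem hypArea_setOf_re_im_mem {s : Set (ℝ × ℝ)} (hs : MeasurableSet s) :
    hypArea {z | (z.re, z.im) ∈ s} =
      ∫⁻ y in Ioi 0, ENNReal.ofReal (1 / y ^ 2) * volume {x | (x, y) ∈ s} := by
  have image_eq : ((↑) : ℍ → ℂ) '' {z | (z.re, z.im) ∈ s} =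
      Complex.measurableEquivRealProd ⁻¹' (s ∩ univ ×ˢ Ioi 0) := by
    ext z
    constructor
    · rintro ⟨z, hz, rfl⟩
      exact ⟨hz, mem_univ _, z.im_pos⟩
    · rintro ⟨hz, -, him⟩
      exact ⟨⟨z, him⟩, hz, rfl⟩
  rw [hypArea_apply, image_eq]
  refine (Complex.volume_preserving_equiv_real_prod.setLIntegral_comp_preimage_emb
    Complex.measurableEquivRealProd.measurableEmbedding
    (fun p => ENNReal.ofReal (1 / p.2 ^ 2)) _).trans ?_
  rw [← Measure.restrict_restrict hs, Measure.volume_eq_prod, ← Measure.prod_restrict,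
    Measure.restrict_univ, ← lintegral_indicator hs,
    lintegral_prod_symm' _ (.indicator (by fun_prop) hs)]
  exact lintegral_congr fun y =>
    lintegral_indicator_const (s := {x | (x, y) ∈ s}) (measurable_prodMk_right hs)
      (ENNReal.ofReal (1 / y ^ 2))

theorem lintegral_Ici_rpow_of_lt {p a : ℝ} (hp : p < -1) (ha : 0 < a) :
    ∫⁻ y in Ici a, ENNReal.ofReal (y ^ p) = ENNReal.ofReal (-a ^ (p + 1) / (p + 1)) := by
  rw [← integral_Ioi_rpow_of_lt hp ha, ← restrict_Ioi_eq_restrict_Ici,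
    ofReal_integral_eq_lintegral_ofReal (integrableOn_Ioi_rpow_of_lt hp ha)]
  filter_upwards [ae_restrict_mem measurableSet_Ioi] with y hy
  exact Real.rpow_nonneg (ha.trans hy).le p

theorem hypArea_parabolic_region {a c : ℝ} (ha : 0 < a) (hc : 0 ≤ c) (x : ℝ) :
    hypArea {z | a ≤ z.im ∧ |z.re - x| ≤ c * √z.im} = ENNReal.ofReal (4 * c / √a) := by
  have hmeas : MeasurableSet {p : ℝ × ℝ | a ≤ p.2 ∧ |p.1 - x| ≤ c * √p.2} := by
    measurability
  have density_mul_slice (y : ℝ) :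
      ENNReal.ofReal (1 / y ^ 2) * volume {t : ℝ | a ≤ y ∧ |t - x| ≤ c * √y} =
        (Ici a).indicator
          (fun y => ENNReal.ofReal (2 * c) * ENNReal.ofReal (y ^ (-3 / 2 : ℝ))) y := by
    by_cases hy : a ≤ y
    · have hy0 : 0 < y := ha.trans_le hy
      have slice_eq : {t : ℝ | a ≤ y ∧ |t - x| ≤ c * √y} = closedBall x (c * √y) := by
        ext t
        simp [hy, Real.dist_eq]
      have hpow : y ^ (-3 / 2 : ℝ) = √y / y ^ 2 := by
        rw [Real.sqrt_eq_rpow, ← Real.rpow_natCast, ← Real.rpow_sub hy0]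
        norm_num
      rw [slice_eq, Real.volume_closedBall, indicator_of_mem (mem_Ici.2 hy), hpow,
        ← ENNReal.ofReal_mul (by positivity), ← ENNReal.ofReal_mul (by positivity)]
      ring_nf
    · simp [hy]
  calc hypArea {z | a ≤ z.im ∧ |z.re - x| ≤ c * √z.im}
      = ∫⁻ y in Ioi 0, ENNReal.ofReal (1 / y ^ 2) * volume {t : ℝ | a ≤ y ∧ |t - x| ≤ c * √y} :=
        hypArea_setOf_re_im_mem hmeas
    _ = ∫⁻ y in Ici a, ENNReal.ofReal (2 * c) * ENNReal.ofReal (y ^ (-3 / 2 : ℝ)) := by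
        simp only [density_mul_slice]
        rw [setLIntegral_indicator measurableSet_Ici,
          inter_eq_self_of_subset_left (Ici_subset_Ioi.2 ha)]
    _ = ENNReal.ofReal (2 * c) * ENNReal.ofReal (-a ^ (-3 / 2 + 1 : ℝ) / (-3 / 2 + 1)) := by
        rw [lintegral_const_mul' _ _ ENNReal.ofReal_ne_top,
          lintegral_Ici_rpow_of_lt (by norm_num) ha]
    _ = ENNReal.ofReal (4 * c / √a) := by
        rw [← ENNReal.ofReal_mul (by positivity), show (-3 / 2 + 1 : ℝ) = -(1 / 2) by norm_num,
          Real.rpow_neg ha.le, ← Real.sqrt_eq_rpow]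
        ring_nf

-- The Euclidean bounding box of the ball has area of order `exp (2 * R)`; cutting it down to a
-- parabola recovers the true order `exp R`.
theorem closedBall_subset_parabolic_region (w : ℍ) (R : ℝ) :
    closedBall w R ⊆
      {z | w.im * rexp (-R) ≤ z.im ∧ |z.re - w.re| ≤ rexp (R / 2) * √w.im * √z.im} := by
  intro z hz
  rw [mem_closedBall] at hz
  constructor
  · rw [Real.exp_neg, mul_inv_le_iff₀ (Real.exp_pos R)]
    exact (im_le_im_mul_exp_dist w z).trans (by rw [dist_comm w z]; gcongr)
  · have hsinh : Real.sinh (R / 2) ≤ rexp (R / 2) / 2 := by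
      rw [Real.sinh_eq]; linarith [Real.exp_pos (-(R / 2))]
    calc |z.re - w.re| ≤ dist (z : ℂ) w := by
          simpa [Complex.dist_eq] using Complex.abs_re_le_norm ((z : ℂ) - w)
      _ ≤ rexp (R / 2) / 2 * (2 * √(z.im * w.im)) :=
          (div_le_iff₀ (by positivity)).1 ((dist_le_iff_le_sinh.1 hz).trans hsinh)
      _ = rexp (R / 2) * √w.im * √z.im := by
          rw [Real.sqrt_mul z.im_pos.le]; ring

theorem hypArea_closedBall_le (w : ℍ) (R : ℝ) :
    hypArea (closedBall w R) ≤ ENNReal.ofReal (4 * rexp R) := by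
  refine (measure_mono (closedBall_subset_parabolic_region w R)).trans_eq ?_
  rw [hypArea_parabolic_region (mul_pos w.im_pos (Real.exp_pos _)) (by positivity),
    Real.sqrt_mul w.im_pos.le, ← Real.exp_half, neg_div, Real.exp_neg, ← add_halves R, Real.exp_add]
  congr 1
  simp only [add_halves]
  field_simp

theorem le_hypArea_ball (w : ℍ) {r : ℝ} (hr : 0 ≤ r) :
    ENNReal.ofReal (π * (r * rexp (-r)) ^ 2) ≤ hypArea (ball w r) := by
  have density_le : ∀ z ∈ ((↑) : ℍ → ℂ) '' ball w r,
      ENNReal.ofReal (1 / (w.im * rexp r) ^ 2) ≤ ENNReal.ofReal (1 / z.im ^ 2) := by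
    rintro _ ⟨z, hz, rfl⟩
    have him : z.im ≤ w.im * rexp r :=
      (im_le_im_mul_exp_dist z w).trans (by gcongr; exact (mem_ball.1 hz).le)
    rw [coe_im]
    gcongr
  have euclidean_area_le : ENNReal.ofReal (π * (w.im * r) ^ 2) ≤
      volume (((↑) : ℍ → ℂ) '' ball w r) := by
    rw [image_coe_ball, Complex.volume_ball, mul_comm π, ENNReal.ofReal_mul (by positivity),
      ENNReal.ofReal_pow (by positivity), ← NNReal.coe_real_pi, ENNReal.ofReal_coe_nnreal]
    gcongr
    exact Real.self_le_sinh_iff.2 hr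
  have hmeas : MeasurableSet (((↑) : ℍ → ℂ) '' ball w r) :=
    measurableEmbedding_coe.measurableSet_image.2 measurableSet_ball
  calc ENNReal.ofReal (π * (r * rexp (-r)) ^ 2)
      = ENNReal.ofReal (1 / (w.im * rexp r) ^ 2) * ENNReal.ofReal (π * (w.im * r) ^ 2) := by
        rw [← ENNReal.ofReal_mul (by positivity), Real.exp_neg]
        congr 1
        field_simp
    _ ≤ ENNReal.ofReal (1 / (w.im * rexp r) ^ 2) * volume (((↑) : ℍ → ℂ) '' ball w r) := by gcongr
    _ ≤ ∫⁻ z : ℂ in (↑) '' ball w r, ENNReal.ofReal (1 / z.im ^ 2) := by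
        rw [← setLIntegral_const]
        exact setLIntegral_mono' hmeas density_le
    _ = hypArea (ball w r) := (hypArea_apply _).symm


theorem encard_le_of_dist_le_of_separated {ι : Type*} {p : ι → ℍ} {s : Set ι} {z : ℍ} {R ε : ℝ}
    (hε : 0 < ε) (hR : ∀ i ∈ s, dist z (p i) ≤ R)
    (hsep : s.Pairwise fun i j => 2 * ε ≤ dist (p i) (p j)) :
    (s.encard : ℝ≥0∞) ≤ ENNReal.ofReal (4 / π * rexp 3 * (rexp R / min 1 (ε ^ 2))) := by
  set r : ℝ := min 1 ε
  have hr : 0 < r := lt_min one_pos hε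
  have hr1 : r ≤ 1 := min_le_left _ _
  have sq_eq : r ^ 2 = min 1 (ε ^ 2) := by
    rcases le_total 1 ε with h | h
    · simp [r, h, one_le_pow₀ h]
    · simp [r, h, pow_le_one₀ hε.le h]
  have ball_area (w : ℍ) : ENNReal.ofReal (π * r ^ 2 * rexp (-2)) ≤ hypArea (ball w r) := by
    refine le_trans (ENNReal.ofReal_le_ofReal ?_) (le_hypArea_ball w hr.le)
    rw [mul_pow, ← Real.exp_nat_mul, ← mul_assoc]
    gcongr
    push_cast; linarith
  have packing : s.encard * ENNReal.ofReal (π * r ^ 2 * rexp (-2)) ≤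
      ENNReal.ofReal (4 * rexp (R + 1)) :=
    calc s.encard * ENNReal.ofReal (π * r ^ 2 * rexp (-2))
        ≤ hypArea (closedBall z (R + r)) :=
          encard_mul_le_measure_closedBall hR
            (hsep.mono' fun i j h => le_trans (by gcongr; exact min_le_right _ _) h)
            fun i _ => ball_area (p i)
      _ ≤ hypArea (closedBall z (R + 1)) := by gcongr
      _ ≤ ENNReal.ofReal (4 * rexp (R + 1)) := hypArea_closedBall_le z (R + 1)
  calc (s.encard : ℝ≥0∞)
      ≤ ENNReal.ofReal (4 * rexp (R + 1)) / ENNReal.ofReal (π * r ^ 2 * rexp (-2)) :=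
        (ENNReal.le_div_iff_mul_le (.inl (by positivity)) (.inl ENNReal.ofReal_ne_top)).2 packing
    _ = ENNReal.ofReal (4 / π * rexp 3 * (rexp R / min 1 (ε ^ 2))) := by
        rw [← ENNReal.ofReal_div_of_pos (by positivity), ← sq_eq, Real.exp_add, Real.exp_neg,
          show (3 : ℝ) = 2 + 1 by norm_num, Real.exp_add]
        congr 1
        field_simp

end HyperbolicArea

theorem hilbert_schmidt_norm_bound_general {G E : Type*} [Group G] [Countable G] [MulAction G ℍ]
    [IsIsometricSMul G ℍ] [SMulInvariantMeasure G ℍ hypArea] [NormedAddCommGroup E]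
    [MeasurableSpace E] [OpensMeasurableSpace E] {F : Set ℍ} (hF : MeasurableSet F)
    (hdisj : Pairwise (AEDisjoint hypArea on fun g : G => g • F)) {K : ℍ → ℍ → E}
    (hK : Measurable (uncurry K)) {R ε S : ℝ} (hS : ∀ z ∈ F, ∀ w, ‖K z w‖ ^ 2 ≤ S) (hε : 0 < ε)
    (hR : ∀ z w, R < dist z w → K z w = 0)
    (hsep : ∀ w, (∃ z, K z w ≠ 0) → ∀ g : G, g ≠ 1 → 2 * ε ≤ dist w (g • w)) :
    ∫⁻ z in F, ∫⁻ w in F, ‖∑' g : G, K z (g • w)‖ₑ ^ 2 ∂hypArea ∂hypArea ≤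
      ∫⁻ z in F, ∫⁻ w, ‖K z w‖ₑ ^ 2 ∂hypArea ∂hypArea +
        ENNReal.ofReal (16 / π * rexp 3 * (rexp (2 * R) / min 1 (ε ^ 2)) * S) *
          hypArea (thinPart G F R) := by
  set k : ℍ → ℍ → ℝ≥0∞ := fun z w => ‖K z w‖ₑ
  set N : ℝ := 4 / π * rexp 3 * (rexp R / min 1 (ε ^ 2))
  have orbit_count (z w : ℍ) :
      (support fun g : G => k z (g • w)).encard ≤ ENNReal.ofReal N :=
    encard_le_of_dist_le_of_separated (z := z) hε
      (fun g hg => not_lt.1 fun hlt => hg (by simp [k, hR z (g • w) hlt]))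
      (pairwise_le_dist_smul_of_ne_zero (fun w hw => hsep w ⟨z, by simpa [k] using hw⟩) w)
  have sq_le : ∀ z ∈ F, ∀ w, k z w ^ 2 ≤ ENNReal.ofReal S := fun z hz w => by
    simpa only [k, ← ofReal_norm, ← ENNReal.ofReal_pow (norm_nonneg _)] using
      ENNReal.ofReal_le_ofReal (hS z hz w)
  have const_eq : ENNReal.ofReal N * (ENNReal.ofReal S * ENNReal.ofReal (4 * rexp R)) =
      ENNReal.ofReal (16 / π * rexp 3 * (rexp (2 * R) / min 1 (ε ^ 2)) * S) := by
    rw [mul_left_comm, ← ENNReal.ofReal_mul (by positivity), mul_comm,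
      ← ENNReal.ofReal_mul (by positivity), two_mul, Real.exp_add]
    congr 1
    ring
  calc ∫⁻ z in F, ∫⁻ w in F, ‖∑' g : G, K z (g • w)‖ₑ ^ 2 ∂hypArea ∂hypArea
      ≤ ∫⁻ z in F, ∫⁻ w in F, automorphicKernel G k z w ^ 2 ∂hypArea ∂hypArea :=
        lintegral_mono fun z => lintegral_mono fun w => by
          gcongr; exact enorm_tsum_le_tsum_enorm
    _ ≤ _ := const_eq ▸ lintegral_lintegral_automorphicKernel_sq_le hF hdisj hK.enorm
        (fun z w h => by simp [k, hR z w h]) orbit_count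
        (fun w => hypArea_closedBall_le w R) sq_le

/-- **Hilbert–Schmidt norm bound for invariant kernels (Lemma 3.5 of the paper).**
There is a universal constant `C > 0` such that: for every countable subgroup `Γ` of
`SL(2, ℝ)` acting freely on the upper half-plane, every measurable fundamental domain `F`
for the action (translates pairwise a.e. disjoint, union covering up to a null set), every
bounded measurable `Γ`-invariant kernel `K` supported within distance `R` of the diagonal,
such that every point `w` in the support of `K` satisfies `d(w, γ·w) ≥ 2ε` for all
`γ ∈ Γ \ {1}`, the squared Hilbert–Schmidt norm of the induced operator is bounded by
`∫_F ∫_ℍ K² + C (e^{2R} / min 1 ε²) μ(F_{≤R}) sup K²`. -/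
theorem hilbert_schmidt_norm_bound :
    ∃ C : ℝ, 0 < C ∧
      ∀ (Γ : Subgroup (Matrix.SpecialLinearGroup (Fin 2) ℝ)), Countable Γ →
        (∀ γ ∈ Γ, (∃ z : UpperHalfPlane, γ • z = z) → γ = 1) →
        ∀ F : Set UpperHalfPlane, MeasurableSet F →
          (∀ γ ∈ Γ, ∀ γ' ∈ Γ, γ ≠ γ' →
            hypArea ((fun z => γ • z) '' F ∩ (fun z => γ' • z) '' F) = 0) →
          hypArea (⋃ γ ∈ Γ, (fun z => γ • z) '' F)ᶜ = 0 →
          ∀ K : UpperHalfPlane → UpperHalfPlane → ℝ,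
            Measurable (Function.uncurry K) →
            (∃ M : ℝ, ∀ z w, |K z w| ≤ M) →
            (∀ γ ∈ Γ, ∀ z w : UpperHalfPlane, K (γ • z) (γ • w) = K z w) →
            ∀ R ε : ℝ, 0 < R → 0 < ε →
              (∀ z w : UpperHalfPlane, R < dist z w → K z w = 0) →
              (∀ w : UpperHalfPlane, (∃ z, K z w ≠ 0) →
                ∀ γ ∈ Γ, γ ≠ 1 → 2 * ε ≤ dist w (γ • w)) →
              (∫⁻ z in F, ∫⁻ w in F,
                  ENNReal.ofReal
                    ((∑' γ : Γ, K z ((γ : Matrix.SpecialLinearGroup (Fin 2) ℝ) • w)) ^ 2)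
                  ∂hypArea ∂hypArea) ≤
                (∫⁻ z in F, ∫⁻ w,
                    ENNReal.ofReal ((K z w) ^ 2) ∂hypArea ∂hypArea) +
                  ENNReal.ofReal (C * (Real.exp (2 * R) / min 1 (ε ^ 2)) *
                      sSup {y : ℝ | ∃ z ∈ F, ∃ w : UpperHalfPlane, y = (K z w) ^ 2}) *
                    hypArea {z ∈ F | ∃ γ ∈ Γ, γ ≠ 1 ∧ dist z (γ • z) ≤ 2 * R} := by
  refine ⟨16 / π * rexp 3, by positivity, ?_⟩
  intro Γ _ _ F hF hdisj _ K hK ⟨M, hM⟩ _ R ε _ hε hR hsep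
  have hS : ∀ z ∈ F, ∀ w, ‖K z w‖ ^ 2 ≤ sSup {y : ℝ | ∃ z ∈ F, ∃ w : ℍ, y = K z w ^ 2} :=
    fun z hz w => by
      refine (sq_abs (K z w)).trans_le <| le_csSup ⟨M ^ 2, ?_⟩ ⟨z, hz, w, rfl⟩
      rintro _ ⟨z, -, w, rfl⟩
      exact sq_le_sq' (abs_le.1 (hM z w)).1 (abs_le.1 (hM z w)).2
  have hdisj' : Pairwise (AEDisjoint hypArea on fun γ : Γ => γ • F) := fun γ γ' hne =>
    hdisj γ γ.2 γ' γ'.2 (Subtype.coe_ne_coe.2 hne)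
  have thinPart_eq : thinPart Γ F R = {z ∈ F | ∃ γ ∈ Γ, γ ≠ 1 ∧ dist z (γ • z) ≤ 2 * R} := by
    ext; simp [thinPart, Subgroup.smul_def, and_left_comm]
  have hgen := hilbert_schmidt_norm_bound_general hF hdisj' hK hS hε hR
    fun w hw γ hγ => hsep w hw γ γ.2 (by simpa using hγ)
  simpa only [← thinPart_eq, Subgroup.smul_def, ← Real.enorm_of_nonneg (sq_nonneg _), enorm_pow]
    using hgen
end
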